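/- (Strong Lüders rule from regularised entropic projection.) Let ψ ∈ M_d(ℂ) be a positive definite density matrix and let P be a nonzero projection, so t := Re tr(ψ·P) > 0. For positive semidefinite φ with φ = P·φ·P, tr(φ) = 1, and φ + (1−P) positive definite, define the regularised distance D₀ᴾ(φ,ψ) := Re(tr(P·ψ·P·(log(P·ψ·P + (1−P)) − log(φ + (1−P))))). Then φ* := (P·ψ·P)/t satisfies all these constraints and is the unique minimiser of D₀ᴾ(·,ψ) among all φ satisfying them: D₀ᴾ(φ*,ψ) ≤ D₀ᴾ(φ,ψ), with equality if and only if φ = φ*. -/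

import Mathlib

open Matrix
open scoped ComplexOrder

/-- Matrix logarithm: the real logarithm applied via the continuous functional calculus. -/
noncomputable def matLog {d : ℕ} (A : Matrix (Fin d) (Fin d) ℂ) : Matrix (Fin d) (Fin d) ℂ :=
  cfc Real.log A

/-- The regularised distance
`D₀ᴾ(φ,ψ) := Re tr(P ψ P · (log(P ψ P + (1−P)) − log(φ + (1−P))))`. -/
noncomputable def regD0P {d : ℕ} (P φ ψ : Matrix (Fin d) (Fin d) ℂ) : ℝ :=
  (Matrix.trace (P * ψ * P *
    (matLog (P * ψ * P + (1 - P)) - matLog (φ + (1 - P))))).re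

/-!
In eigenbases `(aᵢ, uᵢ)` of `A` and `(bⱼ, vⱼ)` of `B`, the quantity
`Re tr (A (log A - log B)) - Re tr (A - B)` is the sum of `|⟨uᵢ, vⱼ⟩|² bⱼ klFun (aᵢ / bⱼ)`. The
terms are nonnegative, and if they all vanish then `uᵢ ⟂ vⱼ` whenever `aᵢ ≠ bⱼ`, so `A = B`; this
is Klein's inequality with its equality case.

Since `log (φ + (1 - P))` annihilates the range of `1 - P`, the corner relative entropy of `φ*` and
`φ` is the full relative entropy `D` of `φ* + (1 - P)` and `φ + (1 - P)`. As `P ψ P = t φ*`, we have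
`D₀ᴾ(φ, ψ) - D₀ᴾ(φ*, ψ) = t D(φ* + (1 - P) ‖ φ + (1 - P))`, and Klein's inequality gives the
minimiser and its uniqueness.
-/

open InformationTheory (klFun klFun_apply klFun_nonneg klFun_eq_zero_iff)

variable {n 𝕜 : Type*} [Fintype n] [RCLike 𝕜] {A B P : Matrix n n 𝕜}

section Compression

lemma posSemidef_compression (hP : IsSelfAdjoint P) (hA : A.PosSemidef) :
    (P * A * P).PosSemidef := by
  have h := hA.mul_mul_conjTranspose_same P
  rwa [← star_eq_conjTranspose, hP.star_eq] at h

lemma posSemidef_of_isStarProjection (hP : IsStarProjection P) : P.PosSemidef := by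
  have h := posSemidef_conjTranspose_mul_self P
  rwa [← star_eq_conjTranspose, hP.isSelfAdjoint.star_eq, hP.isIdempotentElem.eq] at h

lemma dotProduct_compression_mulVec (hP : IsSelfAdjoint P) (A : Matrix n n 𝕜) (v : n → 𝕜) :
    star v ⬝ᵥ (P * A * P) *ᵥ v = star (P *ᵥ v) ⬝ᵥ A *ᵥ (P *ᵥ v) := by
  rw [star_mulVec, ← star_eq_conjTranspose, hP.star_eq, ← dotProduct_mulVec, mulVec_mulVec,
    mulVec_mulVec, mul_assoc]

variable [DecidableEq n]

lemma posDef_compression_add_one_sub (hP : IsStarProjection P) (hA : A.PosDef) :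
    (P * A * P + (1 - P)).PosDef := by
  have hPAP := posSemidef_compression hP.isSelfAdjoint hA.posSemidef
  have hQ := posSemidef_of_isStarProjection hP.one_sub
  refine .of_dotProduct_mulVec_pos (hPAP.add hQ).isHermitian fun v hv ↦ ?_
  rw [add_mulVec, dotProduct_add]
  by_cases hPv : P *ᵥ v = 0
  · have hQv : (1 - P) *ᵥ v = v := by rw [sub_mulVec, hPv, one_mulVec, sub_zero]
    rw [hQv]
    exact add_pos_of_nonneg_of_pos (hPAP.dotProduct_mulVec_nonneg v)
      (dotProduct_star_self_pos_iff.2 hv)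
  · rw [dotProduct_compression_mulVec hP.isSelfAdjoint]
    exact add_pos_of_pos_of_nonneg (hA.dotProduct_mulVec_pos hPv) (hQ.dotProduct_mulVec_nonneg v)

end Compression

variable [DecidableEq n]

section FunctionalCalculus

lemma continuousOn_spectrum (A : Matrix n n 𝕜) (f : ℝ → ℝ) : ContinuousOn f (spectrum ℝ A) :=
  A.finite_real_spectrum.continuousOn f

lemma cfc_mul_of_mul_eq_smul {m : Type*} (hA : A.IsHermitian) (f : ℝ → ℝ) {Q : Matrix n m 𝕜} {c : ℝ}
    (hQ : A * Q = c • Q) : cfc f A * Q = f c • Q := by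
  have hA' : IsSelfAdjoint A := hA
  have continuousOn := continuousOn_spectrum A
  let q : ℝ → ℝ := fun x ↦ (f x - f c) / (x - c)
  -- At `x = c` this holds because `y / 0 = 0`; every function on the finite spectrum is continuous,
  -- so `f` need not be differentiable at `c`.
  have hf : f = fun x ↦ q x * (x - c) + f c := by
    funext x
    rcases eq_or_ne x c with rfl | hx
    · simp
    · simp [q, div_mul_cancel₀ _ (sub_ne_zero.2 hx)]
  have hcfc : cfc f A = cfc q A * (A - c • 1) + f c • 1 := by
    conv_lhs => rw [hf]
    rw [cfc_add_const _ _ A (continuousOn _), cfc_mul _ _ A (continuousOn _) (continuousOn _),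
      cfc_sub _ _ A (continuousOn _) (continuousOn _), cfc_id' ℝ A, cfc_const c A,
      Algebra.algebraMap_eq_smul_one, Algebra.algebraMap_eq_smul_one]
  rw [hcfc, Matrix.add_mul, Matrix.mul_assoc, Matrix.sub_mul, hQ]
  simp

/-- The squared modulus of the inner product of the `i`-th eigenvector of `A` and the `j`-th
eigenvector of `B`, read off as an entry of the change-of-basis matrix; these are the weights in
traces of the form `tr (f(A) g(B))`. -/
noncomputable def eigenvectorOverlap (hA : A.IsHermitian) (hB : B.IsHermitian) (i j : n) : ℝ :=
  ‖((hA.eigenvectorUnitary : Matrix n n 𝕜)ᴴ * (hB.eigenvectorUnitary : Matrix n n 𝕜)) i j‖ ^ 2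

lemma cfc_eq_mul_diagonal_mul (hA : A.IsHermitian) (f : ℝ → ℝ) :
    cfc f A = (hA.eigenvectorUnitary : Matrix n n 𝕜) *
      diagonal (fun i ↦ (f (hA.eigenvalues i) : 𝕜)) * (hA.eigenvectorUnitary : Matrix n n 𝕜)ᴴ := by
  rw [hA.cfc_eq]
  rfl

lemma trace_diagonal_mul_mul_diagonal_mul (a b : n → ℝ) (W : Matrix n n 𝕜) :
    trace (diagonal (fun i ↦ (a i : 𝕜)) * W * (diagonal (fun j ↦ (b j : 𝕜)) * Wᴴ)) =
      ((∑ i, ∑ j, ‖W i j‖ ^ 2 * (a i * b j) : ℝ) : 𝕜) := by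
  push_cast
  refine Finset.sum_congr rfl fun i _ ↦ ?_
  rw [diag_apply, mul_apply]
  refine Finset.sum_congr rfl fun j _ ↦ ?_
  rw [diagonal_mul, diagonal_mul, conjTranspose_apply, ← RCLike.mul_conj]
  simp only [RCLike.star_def]
  ring

lemma trace_cfc_mul_cfc (hA : A.IsHermitian) (hB : B.IsHermitian) (f g : ℝ → ℝ) :
    trace (cfc f A * cfc g B) = ((∑ i, ∑ j, eigenvectorOverlap hA hB i j *
      (f (hA.eigenvalues i) * g (hB.eigenvalues j)) : ℝ) : 𝕜) := by
  unfold eigenvectorOverlap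
  rw [← trace_diagonal_mul_mul_diagonal_mul (fun i ↦ f (hA.eigenvalues i)),
    cfc_eq_mul_diagonal_mul hA, cfc_eq_mul_diagonal_mul hB, conjTranspose_mul,
    conjTranspose_conjTranspose]
  simp only [mul_assoc]
  rw [trace_mul_comm]
  simp only [mul_assoc]

lemma eq_of_eigenvectorOverlap_eq_zero (hA : A.IsHermitian) (hB : B.IsHermitian)
    (h : ∀ i j, hA.eigenvalues i ≠ hB.eigenvalues j → eigenvectorOverlap hA hB i j = 0) :
    A = B := by
  let U : Matrix n n 𝕜 := hA.eigenvectorUnitary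
  let V : Matrix n n 𝕜 := hB.eigenvectorUnitary
  let a : Matrix n n 𝕜 := diagonal fun i ↦ (hA.eigenvalues i : 𝕜)
  let b : Matrix n n 𝕜 := diagonal fun j ↦ (hB.eigenvalues j : 𝕜)
  have hU : U * Uᴴ = 1 := Unitary.coe_mul_star_self hA.eigenvectorUnitary
  have hV : V * Vᴴ = 1 := Unitary.coe_mul_star_self hB.eigenvectorUnitary
  have hAU : A = U * a * Uᴴ := by
    rw [← cfc_eq_mul_diagonal_mul hA fun x ↦ x, cfc_id' ℝ A hA.isSelfAdjoint]
  have hBV : B = V * b * Vᴴ := by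
    rw [← cfc_eq_mul_diagonal_mul hB fun x ↦ x, cfc_id' ℝ B hB.isSelfAdjoint]
  have intertwine : a * (Uᴴ * V) = Uᴴ * V * b := by
    ext i j
    rw [diagonal_mul, mul_diagonal]
    by_cases hij : hA.eigenvalues i = hB.eigenvalues j
    · rw [hij, mul_comm]
    · have hW : (Uᴴ * V) i j = 0 := norm_eq_zero.1 (pow_eq_zero_iff two_ne_zero |>.1 (h i j hij))
      rw [hW, mul_zero, zero_mul]
  calc A = U * a * Uᴴ * (V * Vᴴ) := by rw [hV, mul_one, ← hAU]
    _ = U * (a * (Uᴴ * V)) * Vᴴ := by simp only [mul_assoc]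
    _ = U * Uᴴ * (V * b * Vᴴ) := by rw [intertwine]; simp only [mul_assoc]
    _ = B := by rw [hU, one_mul, ← hBV]

end FunctionalCalculus

section KleinInequality

/-- The Umegaki relative entropy `Re tr (A (log A - log B))`. The logarithm is that of the real
functional calculus, with `Real.log 0 = 0`, so it is meaningful for `A` positive semidefinite and
`B` positive definite. -/
noncomputable def umegakiEntropy (A B : Matrix n n 𝕜) : ℝ :=
  RCLike.re (trace (A * (cfc Real.log A - cfc Real.log B)))

lemma mul_klFun_div (a : ℝ) {b : ℝ} (hb : b ≠ 0) :
    b * klFun (a / b) = a * Real.log a - a * Real.log b - a + b := by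
  rcases eq_or_ne a 0 with rfl | ha
  · simp [klFun_apply]
  · rw [klFun_apply, Real.log_div ha hb]
    field_simp
    ring

lemma umegakiEntropy_eq_sum_klFun (hA : A.IsHermitian) (hB : B.PosDef) :
    umegakiEntropy A B = RCLike.re (trace (A - B)) +
      ∑ i, ∑ j, eigenvectorOverlap hA hB.isHermitian i j *
        (hB.isHermitian.eigenvalues j *
          klFun (hA.eigenvalues i / hB.isHermitian.eigenvalues j)) := by
  have hA' : IsSelfAdjoint A := hA
  have hB' : IsSelfAdjoint B := hB.isHermitian
  have trace_mul_log_self := trace_cfc_mul_cfc hA hB.isHermitian (fun x ↦ x * Real.log x) 1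
  have trace_mul_log := trace_cfc_mul_cfc hA hB.isHermitian id Real.log
  have trace_left := trace_cfc_mul_cfc hA hB.isHermitian id 1
  have trace_right := trace_cfc_mul_cfc hA hB.isHermitian 1 id
  rw [cfc_mul _ _ A (continuousOn_spectrum A _) (continuousOn_spectrum A _), cfc_id' ℝ A,
    cfc_one ℝ B, mul_one] at trace_mul_log_self
  rw [cfc_id ℝ A] at trace_mul_log
  rw [cfc_id ℝ A, cfc_one ℝ B, mul_one] at trace_left
  rw [cfc_id ℝ B, cfc_one ℝ A, one_mul] at trace_right
  rw [umegakiEntropy, mul_sub, trace_sub, trace_sub, trace_mul_log_self, trace_mul_log, trace_left,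
    trace_right]
  simp only [map_sub, RCLike.ofReal_re, ← Finset.sum_sub_distrib, ← Finset.sum_add_distrib,
    Pi.one_apply, id_eq]
  refine Finset.sum_congr rfl fun i _ ↦ Finset.sum_congr rfl fun j _ ↦ ?_
  rw [mul_klFun_div _ (hB.eigenvalues_pos j).ne']
  ring

lemma eigenvectorOverlap_mul_klFun_nonneg (hA : A.PosSemidef) (hB : B.PosDef) (i j : n) :
    0 ≤ eigenvectorOverlap hA.isHermitian hB.isHermitian i j *
      (hB.isHermitian.eigenvalues j *
        klFun (hA.isHermitian.eigenvalues i / hB.isHermitian.eigenvalues j)) :=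
  mul_nonneg (sq_nonneg _) <| mul_nonneg (hB.eigenvalues_pos j).le <|
    klFun_nonneg <| div_nonneg (hA.eigenvalues_nonneg i) (hB.eigenvalues_pos j).le

theorem re_trace_sub_le_umegakiEntropy (hA : A.PosSemidef) (hB : B.PosDef) :
    RCLike.re (trace (A - B)) ≤ umegakiEntropy A B := by
  rw [umegakiEntropy_eq_sum_klFun hA.isHermitian hB]
  exact le_add_of_nonneg_right <| Finset.sum_nonneg fun i _ ↦ Finset.sum_nonneg fun j _ ↦
    eigenvectorOverlap_mul_klFun_nonneg hA hB i j

theorem umegakiEntropy_eq_re_trace_sub_iff (hA : A.PosSemidef) (hB : B.PosDef) :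
    umegakiEntropy A B = RCLike.re (trace (A - B)) ↔ A = B := by
  refine ⟨fun h ↦ ?_, fun h ↦ by simp [umegakiEntropy, h]⟩
  have term_nonneg := eigenvectorOverlap_mul_klFun_nonneg hA hB
  rw [umegakiEntropy_eq_sum_klFun hA.isHermitian hB, add_eq_left,
    Finset.sum_eq_zero_iff_of_nonneg fun i _ ↦ Finset.sum_nonneg fun j _ ↦ term_nonneg i j] at h
  refine eq_of_eigenvectorOverlap_eq_zero hA.isHermitian hB.isHermitian fun i j hij ↦ ?_
  have hb := hB.eigenvalues_pos j
  have term_eq_zero := (Finset.sum_eq_zero_iff_of_nonneg fun j _ ↦ term_nonneg i j).1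
    (h i (Finset.mem_univ i)) j (Finset.mem_univ j)
  refine (mul_eq_zero.1 term_eq_zero).resolve_right (mul_ne_zero hb.ne' fun hkl ↦ hij ?_)
  rwa [klFun_eq_zero_iff (div_nonneg (hA.eigenvalues_nonneg i) hb.le),
    div_eq_one_iff_eq hb.ne'] at hkl

end KleinInequality

section Corner

/-- `A` is a positive definite element of the corner algebra `P Mₙ(𝕜) P`. Positive definiteness
relative to the corner is encoded by adding the complementary projection `1 - P`. -/
structure CornerPosDef (P A : Matrix n n 𝕜) : Prop where
  eq_compression : A = P * A * P
  posDef_add_one_sub : (A + (1 - P)).PosDef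

/-- The faithful states (density matrices) of the corner algebra `P Mₙ(𝕜) P`. -/
def faithfulCornerStates (P : Matrix n n 𝕜) : Set (Matrix n n 𝕜) :=
  {φ | φ.PosSemidef ∧ φ = P * φ * P ∧ φ.trace = 1 ∧ (φ + (1 - P)).PosDef}

/-- The Umegaki relative entropy of the corner algebra `P Mₙ(𝕜) P`, with the logarithms regularised
by the complementary projection `1 - P`. In the paper's notation, `D₀ᴾ(φ, ψ)` is
`cornerEntropy P (P * ψ * P) φ`. -/
noncomputable def cornerEntropy (P A B : Matrix n n 𝕜) : ℝ :=
  RCLike.re (trace (A * (cfc Real.log (A + (1 - P)) - cfc Real.log (B + (1 - P)))))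

lemma cornerPosDef_compression (hP : IsIdempotentElem P) (hA : (P * A * P + (1 - P)).PosDef) :
    CornerPosDef P (P * A * P) where
  eq_compression := by
    simp only [← mul_assoc, hP.eq]
    simp only [mul_assoc, hP.eq]
  posDef_add_one_sub := hA

namespace CornerPosDef

lemma compression_add_one_sub (hP : IsIdempotentElem P) (hA : CornerPosDef P A) :
    P * (A + (1 - P)) * P = A := by
  rw [mul_add, hP.mul_one_sub_self, add_zero, ← hA.eq_compression]

lemma posSemidef (hP : IsStarProjection P) (hA : CornerPosDef P A) : A.PosSemidef := by
  have h := posSemidef_compression hP.isSelfAdjoint hA.posDef_add_one_sub.posSemidef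
  rwa [hA.compression_add_one_sub hP.isIdempotentElem] at h

lemma smul (hP : IsStarProjection P) (hA : CornerPosDef P A) {c : ℝ} (hc : 0 < c) :
    CornerPosDef P (c • A) := by
  have h := cornerPosDef_compression hP.isIdempotentElem <|
    posDef_compression_add_one_sub hP (hA.posDef_add_one_sub.smul hc)
  rwa [mul_smul_comm, smul_mul_assoc, hA.compression_add_one_sub hP.isIdempotentElem] at h

lemma trace_pos (hP : IsStarProjection P) (hP0 : P ≠ 0) (hA : CornerPosDef P A) :
    0 < A.trace := by
  have hA_psd := hA.posSemidef hP
  refine hA_psd.trace_nonneg.lt_of_ne' fun htr ↦ hP0 ?_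
  have hunit := hA.posDef_add_one_sub.isUnit
  rw [hA_psd.trace_eq_zero_iff.1 htr, zero_add] at hunit
  exact hunit.mul_right_eq_zero.1 hP.one_sub_mul_self

lemma log_mul_one_sub (hP : IsIdempotentElem P) (hA : CornerPosDef P A) :
    cfc Real.log (A + (1 - P)) * (1 - P) = 0 := by
  have hAQ : (A + (1 - P)) * (1 - P) = (1 : ℝ) • (1 - P) := by
    rw [add_mul, hA.eq_compression, mul_assoc, hP.mul_one_sub_self, mul_zero, zero_add, one_smul,
      hP.one_sub.eq]
  rw [cfc_mul_of_mul_eq_smul hA.posDef_add_one_sub.isHermitian Real.log hAQ, Real.log_one,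
    zero_smul]

end CornerPosDef

lemma mem_faithfulCornerStates_iff (hP : IsStarProjection P) :
    A ∈ faithfulCornerStates P ↔ CornerPosDef P A ∧ A.trace = 1 :=
  ⟨fun ⟨_, hcorner, htr, hpos⟩ ↦ ⟨⟨hcorner, hpos⟩, htr⟩,
    fun ⟨h, htr⟩ ↦ ⟨h.posSemidef hP, h.eq_compression, htr, h.posDef_add_one_sub⟩⟩

lemma CornerPosDef.inv_trace_smul_mem_faithfulCornerStates (hP : IsStarProjection P) (hP0 : P ≠ 0)
    (hA : CornerPosDef P A) :
    (RCLike.re A.trace)⁻¹ • A ∈ faithfulCornerStates P := by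
  obtain ⟨hre, him⟩ := RCLike.pos_iff.1 (hA.trace_pos hP hP0)
  refine (mem_faithfulCornerStates_iff hP).2 ⟨hA.smul hP (inv_pos.2 hre), ?_⟩
  rw [trace_smul, RCLike.ext_iff]
  simp [RCLike.smul_re, RCLike.smul_im, him, hre.ne']

lemma umegakiEntropy_add_one_sub (hP : IsIdempotentElem P) (hA : CornerPosDef P A)
    (hB : CornerPosDef P B) :
    umegakiEntropy (A + (1 - P)) (B + (1 - P)) = cornerEntropy P A B := by
  rw [umegakiEntropy, cornerEntropy, add_mul, trace_add, trace_mul_comm (1 - P), sub_mul,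
    hA.log_mul_one_sub hP, hB.log_mul_one_sub hP, sub_zero, trace_zero, add_zero]

lemma cornerEntropy_nonneg (hP : IsIdempotentElem P) (hA : CornerPosDef P A)
    (hB : CornerPosDef P B) (htr : A.trace = B.trace) : 0 ≤ cornerEntropy P A B := by
  simpa [← umegakiEntropy_add_one_sub hP hA hB, htr] using
    re_trace_sub_le_umegakiEntropy hA.posDef_add_one_sub.posSemidef hB.posDef_add_one_sub

lemma cornerEntropy_eq_zero_iff (hP : IsIdempotentElem P) (hA : CornerPosDef P A)
    (hB : CornerPosDef P B) (htr : A.trace = B.trace) : cornerEntropy P A B = 0 ↔ A = B := by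
  simpa [← umegakiEntropy_add_one_sub hP hA hB, htr] using
    umegakiEntropy_eq_re_trace_sub_iff hA.posDef_add_one_sub.posSemidef hB.posDef_add_one_sub

lemma cornerEntropy_sub_cornerEntropy_inv_smul {c : ℝ} (hc : c ≠ 0) (P A B : Matrix n n 𝕜) :
    cornerEntropy P A B - cornerEntropy P A (c⁻¹ • A) = c * cornerEntropy P (c⁻¹ • A) B := by
  simp only [cornerEntropy, smul_mul_assoc, trace_smul, RCLike.smul_re, mul_inv_cancel_left₀ hc,
    ← map_sub, ← trace_sub, ← mul_sub, sub_sub_sub_cancel_left]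

end Corner

theorem strong_lueders_regularised_entropic_projection_general {ψ P : Matrix n n 𝕜}
    (hP : IsStarProjection P) (hP0 : P ≠ 0) (hψ : (P * ψ * P + (1 - P)).PosDef) :
    0 < RCLike.re (trace (ψ * P)) ∧
      (RCLike.re (trace (ψ * P)))⁻¹ • (P * ψ * P) ∈ faithfulCornerStates P ∧
        ∀ φ ∈ faithfulCornerStates P,
          cornerEntropy P (P * ψ * P) ((RCLike.re (trace (ψ * P)))⁻¹ • (P * ψ * P)) ≤
              cornerEntropy P (P * ψ * P) φ ∧
            (cornerEntropy P (P * ψ * P) φ =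
                cornerEntropy P (P * ψ * P) ((RCLike.re (trace (ψ * P)))⁻¹ • (P * ψ * P)) ↔
              φ = (RCLike.re (trace (ψ * P)))⁻¹ • (P * ψ * P)) := by
  have hcorner := cornerPosDef_compression hP.isIdempotentElem hψ
  have htr : trace (ψ * P) = trace (P * ψ * P) := by
    rw [trace_mul_cycle, hP.isIdempotentElem.eq, trace_mul_comm]
  rw [htr]
  have ht : 0 < RCLike.re (trace (P * ψ * P)) := (RCLike.pos_iff.1 (hcorner.trace_pos hP hP0)).1
  have hstar := hcorner.inv_trace_smul_mem_faithfulCornerStates hP hP0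
  refine ⟨ht, hstar, fun φ hφ ↦ ?_⟩
  obtain ⟨hstar_corner, hstar_trace⟩ := (mem_faithfulCornerStates_iff hP).1 hstar
  obtain ⟨hφ_corner, hφ_trace⟩ := (mem_faithfulCornerStates_iff hP).1 hφ
  have htrace := hstar_trace.trans hφ_trace.symm
  have hgap := cornerEntropy_sub_cornerEntropy_inv_smul ht.ne' P (P * ψ * P) φ
  constructor
  · rw [← sub_nonneg, hgap]
    exact mul_nonneg ht.le (cornerEntropy_nonneg hP.isIdempotentElem hstar_corner hφ_corner htrace)
  · rw [← sub_eq_zero, hgap, mul_eq_zero_iff_left ht.ne',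
      cornerEntropy_eq_zero_iff hP.isIdempotentElem hstar_corner hφ_corner htrace, eq_comm]

/-- Strong Lüders rule from regularised entropic projection: for a positive
definite density matrix `ψ` and a nonzero projection `P`, `t := Re tr(ψ P) > 0`, and
`φ* := (1/t) • (P ψ P)` satisfies the constraints `φ* positive semidefinite`, `φ* = P φ* P`,
`tr φ* = 1`, `φ* + (1−P)` positive definite, and is the unique minimiser of `D₀ᴾ(·,ψ)` among all
`φ` satisfying these constraints. -/
theorem strong_lueders_regularised_entropic_projection {d : ℕ} (hd : 1 ≤ d)
    (ψ P : Matrix (Fin d) (Fin d) ℂ)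
    (hψ : ψ.PosDef) (hψ1 : ψ.trace = 1)
    (hPH : Pᴴ = P) (hP2 : P * P = P) (hPne : P ≠ 0)
    (C : Set (Matrix (Fin d) (Fin d) ℂ))
    (hC : C = {φ | φ.PosSemidef ∧ φ = P * φ * P ∧ φ.trace = 1 ∧ (φ + (1 - P)).PosDef}) :
    0 < (Matrix.trace (ψ * P)).re ∧
      (((Matrix.trace (ψ * P)).re)⁻¹ • (P * ψ * P)) ∈ C ∧
        ∀ φ ∈ C,
          regD0P P (((Matrix.trace (ψ * P)).re)⁻¹ • (P * ψ * P)) ψ ≤ regD0P P φ ψ ∧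
            (regD0P P φ ψ = regD0P P (((Matrix.trace (ψ * P)).re)⁻¹ • (P * ψ * P)) ψ ↔
              φ = ((Matrix.trace (ψ * P)).re)⁻¹ • (P * ψ * P)) := by
  subst hC
  exact strong_lueders_regularised_entropic_projection_general ⟨hP2, hPH⟩ hPne
    (posDef_compression_add_one_sub ⟨hP2, hPH⟩ hψ)
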